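/- Let k be a field, H a k-bialgebra, and G ⊆ H a submonoid of group-like elements that is almost central via bialgebra automorphisms I : G → Aut(H), and write L = H[G⁻¹] with localization map φ : H → L. Then the k-algebra homomorphism (φ ⊗ φ) ∘ Δ : H → L ⊗ₖ L sends every g ∈ G to the invertible element φ(g) ⊗ φ(g) (whose inverse is φ(g)⁻¹ ⊗ φ(g)⁻¹), and hence there exists a unique k-algebra homomorphism Δ̄ : L → L ⊗ₖ L with Δ̄ ∘ φ = (φ ⊗ φ) ∘ Δ; it satisfies Δ̄(x/g) = Σ (x′/g) ⊗ (x″/g) for all x ∈ H and g ∈ G, where Δ(x) = Σ x′ ⊗ x″ in Sweedler notation. -/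

import Mathlib

open scoped TensorProduct

/-!
The right Ore condition on `G` is already forced by the existence of `L`: write `φ(g)⁻¹ φ(x)` as a
right fraction and clear denominators. Let `f : H → A` invert `G`. By the Ore condition the elements
`(f x)(f g)⁻¹` form a subalgebra, and this applies in particular to `(φ, f) : H → L × A`. The
resulting subalgebra of `L × A` projects onto `L` because every element of `L` is a fraction, and
injectively because `φ x = 0` means `x g = 0` for some `g ∈ G`, which forces `f x = 0`. It is
therefore the graph of an algebra homomorphism `L → A` extending `f`. The comultiplication on `L` is
the case `f = (φ ⊗ φ) ∘ Δ`, which maps a group-like `g` to the unit `φ g ⊗ φ g`.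
-/

section Inverse

theorem map_mul_inverse {M N F : Type*} [MonoidWithZero M] [MonoidWithZero N] [FunLike F M N]
    [MonoidHomClass F M N] (f : F) (a : M) {u : M} (hu : IsUnit u) :
    f (a * Ring.inverse u) = f a * Ring.inverse (f u) := by
  rw [Ring.eq_mul_inverse_iff_mul_eq _ _ _ (hu.map f), ← map_mul,
    Ring.inverse_mul_cancel_right _ _ hu]

variable {k A B : Type*} [CommSemiring k] [Semiring A] [Algebra k A] [Semiring B] [Algebra k B]

theorem inverse_tmul {a : A} {b : B} (ha : IsUnit a) (hb : IsUnit b) :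
    Ring.inverse (a ⊗ₜ[k] b) = Ring.inverse a ⊗ₜ[k] Ring.inverse b := by
  obtain ⟨u, rfl⟩ := ha
  obtain ⟨v, rfl⟩ := hb
  let w : (A ⊗[k] B)ˣ :=
    { val := u ⊗ₜ v
      inv := u⁻¹.val ⊗ₜ v⁻¹.val
      val_inv := by simp [Algebra.TensorProduct.one_def]
      inv_val := by simp [Algebra.TensorProduct.one_def] }
  rw [Ring.inverse_unit u, Ring.inverse_unit v]
  exact Ring.inverse_unit w

theorem isUnit_tmul {a : A} {b : B} (ha : IsUnit a) (hb : IsUnit b) : IsUnit (a ⊗ₜ[k] b) := by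
  simpa using (ha.map (Algebra.TensorProduct.includeLeft : A →ₐ[k] A ⊗[k] B)).mul
    (hb.map (Algebra.TensorProduct.includeRight : B →ₐ[k] A ⊗[k] B))

end Inverse

/-- The right Ore condition on a submonoid `G`: a left fraction `g⁻¹ * x` can be rewritten as a
right fraction `y * h⁻¹`. Mathlib's `OreLocalization.OreSet` is the left-handed version, bundled
with chosen numerators and denominators. -/
def IsRightOre {M : Type*} [Monoid M] (G : Submonoid M) : Prop :=
  ∀ x : M, ∀ g ∈ G, ∃ y : M, ∃ h ∈ G, g * y = x * h

section RightFractions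

variable {k H A : Type*} [CommSemiring k] [Semiring H] [Algebra k H] [Semiring A] [Algebra k A]

/-- The subalgebra of elements `a` that are right fractions `(f x)(f g)⁻¹` with `g ∈ G`. This is
expressed as `a * f g = f x`, so that no invertibility enters the definition. -/
def rightFractions {G : Submonoid H} (hG : IsRightOre G) (f : H →ₐ[k] A) : Subalgebra k A where
  carrier := {a | ∃ x : H, ∃ g ∈ G, a * f g = f x}
  algebraMap_mem' r := ⟨algebraMap k H r, 1, G.one_mem, by simp⟩
  add_mem' := by
    rintro a b ⟨x, g, hg, ha⟩ ⟨y, h, hh, hb⟩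
    obtain ⟨u, v, hv, huv⟩ := hG h g hg
    refine ⟨x * u + y * v, h * v, G.mul_mem hh hv, ?_⟩
    calc (a + b) * f (h * v) = a * f (g * u) + b * f (h * v) := by rw [huv, add_mul]
      _ = f (x * u + y * v) := by
        simp only [map_add, map_mul, ← mul_assoc, ha, hb]
  mul_mem' := by
    rintro a b ⟨x, g, hg, ha⟩ ⟨y, h, hh, hb⟩
    obtain ⟨u, v, hv, huv⟩ := hG y g hg
    refine ⟨x * u, h * v, G.mul_mem hh hv, ?_⟩
    calc a * b * f (h * v) = a * (b * f h * f v) := by simp only [map_mul, mul_assoc]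
      _ = a * f (g * u) := by rw [hb, ← map_mul, huv]
      _ = f (x * u) := by simp only [map_mul, ← mul_assoc, ha]

theorem mem_rightFractions {G : Submonoid H} {hG : IsRightOre G} {f : H →ₐ[k] A} {a : A} :
    a ∈ rightFractions hG f ↔ ∃ x : H, ∃ g ∈ G, a * f g = f x :=
  Iff.rfl

theorem apply_mem_rightFractions {G : Submonoid H} (hG : IsRightOre G) (f : H →ₐ[k] A) (x : H) :
    f x ∈ rightFractions hG f :=
  ⟨x, 1, G.one_mem, by simp⟩

end RightFractions

/-- `φ : H → L` exhibits `L` as the right ring of fractions `H[G⁻¹]`. Together, the fields say that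
`ker φ` is the set of `x` annihilated on the right by an element of `G`. -/
structure IsRightRingOfFractions {k H L : Type*} [CommRing k] [Ring H] [Algebra k H]
    [Ring L] [Algebra k L] (G : Submonoid H) (φ : H →ₐ[k] L) : Prop where
  isUnit_map : ∀ g ∈ G, IsUnit (φ g)
  exists_eq_fraction : ∀ a : L, ∃ x : H, ∃ g ∈ G, a = φ x * Ring.inverse (φ g)
  exists_mul_eq_zero : ∀ x : H, φ x = 0 → ∃ g ∈ G, x * g = 0

namespace IsRightRingOfFractions

variable {k H L A : Type*} [CommRing k] [Ring H] [Algebra k H] [Ring L] [Algebra k L]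
  {G : Submonoid H} {φ : H →ₐ[k] L}

section Semiring

variable [Semiring A] [Algebra k A]

theorem exists_mul_eq_map (hφ : IsRightRingOfFractions G φ) (a : L) :
    ∃ x : H, ∃ g ∈ G, a * φ g = φ x := by
  obtain ⟨x, g, hg, ha⟩ := hφ.exists_eq_fraction a
  exact ⟨x, g, hg, (Ring.eq_mul_inverse_iff_mul_eq _ _ _ (hφ.isUnit_map g hg)).mp ha⟩

theorem isRightOre (hφ : IsRightRingOfFractions G φ) : IsRightOre G := by
  intro x g hg
  obtain ⟨y, h, hh, hy⟩ := hφ.exists_mul_eq_map (Ring.inverse (φ g) * φ x)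
  have map_eq : φ (g * y) = φ (x * h) := by
    rw [map_mul, ← hy, mul_assoc, Ring.mul_inverse_cancel_left _ _ (hφ.isUnit_map g hg), map_mul]
  obtain ⟨t, ht, hzero⟩ := hφ.exists_mul_eq_zero (g * y - x * h) <| by
    rw [map_sub, map_eq, sub_self]
  refine ⟨y * t, h * t, G.mul_mem hh ht, ?_⟩
  rwa [sub_mul, sub_eq_zero, mul_assoc, mul_assoc] at hzero

theorem map_eq_zero_of_map_eq_zero (hφ : IsRightRingOfFractions G φ) {f : H →ₐ[k] A}
    (hf : ∀ g ∈ G, IsUnit (f g)) {x : H} (hx : φ x = 0) : f x = 0 := by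
  obtain ⟨g, hg, hxg⟩ := hφ.exists_mul_eq_zero x hx
  rw [← (hf g hg).mul_left_eq_zero, ← map_mul, hxg, map_zero]

theorem algHom_ext (hφ : IsRightRingOfFractions G φ) {F F' : L →ₐ[k] A}
    (h : F.comp φ = F'.comp φ) : F = F' := by
  ext a
  obtain ⟨x, g, hg, rfl⟩ := hφ.exists_eq_fraction a
  have agree (y : H) : F (φ y) = F' (φ y) := DFunLike.congr_fun h y
  have unit_g := hφ.isUnit_map g hg
  rw [map_mul_inverse F _ unit_g, map_mul_inverse F' _ unit_g, agree, agree]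

/-- The algebra of pairs `(φ(x) φ(g)⁻¹, f(x) f(g)⁻¹)`, which is the graph of the extension of `f`
to the right ring of fractions. -/
def graph (hφ : IsRightRingOfFractions G φ) (f : H →ₐ[k] A) : Subalgebra k (L × A) :=
  rightFractions hφ.isRightOre (φ.prod f)

/-- The projection of the graph of the extension of `f` to its domain. -/
def graphFst (hφ : IsRightRingOfFractions G φ) (f : H →ₐ[k] A) : hφ.graph f →ₐ[k] L :=
  (AlgHom.fst k L A).comp (hφ.graph f).val

theorem graphFst_surjective (hφ : IsRightRingOfFractions G φ) {f : H →ₐ[k] A}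
    (hf : ∀ g ∈ G, IsUnit (f g)) : Function.Surjective (hφ.graphFst f) := by
  intro a
  obtain ⟨x, g, hg, ha⟩ := hφ.exists_mul_eq_map a
  have hb : f x * Ring.inverse (f g) * f g = f x := Ring.inverse_mul_cancel_right _ _ (hf g hg)
  exact ⟨⟨(a, f x * Ring.inverse (f g)), x, g, hg, Prod.ext ha hb⟩, rfl⟩

end Semiring

variable [Ring A] [Algebra k A]

theorem graphFst_injective (hφ : IsRightRingOfFractions G φ) {f : H →ₐ[k] A}
    (hf : ∀ g ∈ G, IsUnit (f g)) : Function.Injective (hφ.graphFst f) := by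
  rw [injective_iff_map_eq_zero]
  rintro ⟨⟨a, b⟩, hab⟩ (rfl : a = 0)
  obtain ⟨x, g, hg, heq⟩ := mem_rightFractions.mp hab
  obtain ⟨hx, hb⟩ : 0 * φ g = φ x ∧ b * f g = f x := Prod.mk.inj heq
  have fx_zero : f x = 0 := hφ.map_eq_zero_of_map_eq_zero hf (by rw [← hx, zero_mul])
  have b_zero : b = 0 := (hf g hg).mul_left_eq_zero.mp (hb.trans fx_zero)
  exact Subtype.ext (Prod.ext rfl b_zero)

/-- The extension to the right ring of fractions of an algebra homomorphism that inverts `G`. -/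
noncomputable def lift (hφ : IsRightRingOfFractions G φ) (f : H →ₐ[k] A)
    (hf : ∀ g ∈ G, IsUnit (f g)) : L →ₐ[k] A :=
  ((AlgHom.snd k L A).comp (hφ.graph f).val).comp
    (AlgEquiv.ofBijective (hφ.graphFst f)
      ⟨hφ.graphFst_injective hf, hφ.graphFst_surjective hf⟩).symm.toAlgHom

theorem lift_comp (hφ : IsRightRingOfFractions G φ) (f : H →ₐ[k] A)
    (hf : ∀ g ∈ G, IsUnit (f g)) : (hφ.lift f hf).comp φ = f := by
  ext x
  let e := AlgEquiv.ofBijective (hφ.graphFst f)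
    ⟨hφ.graphFst_injective hf, hφ.graphFst_surjective hf⟩
  let p : hφ.graph f := ⟨(φ x, f x), apply_mem_rightFractions hφ.isRightOre (φ.prod f) x⟩
  have symm_apply : e.symm (φ x) = p := e.symm_apply_apply p
  exact congrArg (fun q : hφ.graph f => q.val.2) symm_apply

end IsRightRingOfFractions

theorem map_comul_eq_tmul_of_isGroupLikeElem {k H L : Type*} [CommSemiring k] [Semiring H]
    [Bialgebra k H] [Semiring L] [Algebra k L] (φ : H →ₐ[k] L) {g : H} (hg : IsGroupLikeElem k g) :
    (Algebra.TensorProduct.map φ φ).comp (Bialgebra.comulAlgHom k H) g = φ g ⊗ₜ[k] φ g := by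
  rw [AlgHom.comp_apply, Bialgebra.comulAlgHom_apply, hg.comul_eq_tmul_self,
    Algebra.TensorProduct.map_tmul]

theorem stmt_6_general {k H L : Type*} [CommRing k] [Ring H] [Bialgebra k H] [Ring L]
    [Algebra k L] (G : Submonoid H) (hG : ∀ g ∈ G, IsGroupLikeElem k g)
    (φ : H →ₐ[k] L) (hφ : IsRightRingOfFractions G φ)
    (ψ : H →ₐ[k] L ⊗[k] L)
    (hψ : ψ = (Algebra.TensorProduct.map φ φ).comp (Bialgebra.comulAlgHom k H)) :
    (∀ g ∈ G, ψ g = φ g ⊗ₜ[k] φ g ∧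
      ψ g * (Ring.inverse (φ g) ⊗ₜ[k] Ring.inverse (φ g)) = 1 ∧
      (Ring.inverse (φ g) ⊗ₜ[k] Ring.inverse (φ g)) * ψ g = 1) ∧
    ∃ Δbar : L →ₐ[k] L ⊗[k] L,
      Δbar.comp φ = ψ ∧
      (∀ D : L →ₐ[k] L ⊗[k] L, D.comp φ = ψ → D = Δbar) ∧
      (∀ x : H, ∀ g ∈ G,
        Δbar (φ x * Ring.inverse (φ g)) =
          ψ x * (Ring.inverse (φ g) ⊗ₜ[k] Ring.inverse (φ g))) := by
  have map_g (g : H) (hg : g ∈ G) : ψ g = φ g ⊗ₜ[k] φ g := by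
    rw [hψ, map_comul_eq_tmul_of_isGroupLikeElem φ (hG g hg)]
  have unit_g (g : H) (hg : g ∈ G) : IsUnit (ψ g) := by
    rw [map_g g hg]
    exact isUnit_tmul (hφ.isUnit_map g hg) (hφ.isUnit_map g hg)
  have inverse_g (g : H) (hg : g ∈ G) :
      Ring.inverse (ψ g) = Ring.inverse (φ g) ⊗ₜ[k] Ring.inverse (φ g) := by
    rw [map_g g hg, inverse_tmul (hφ.isUnit_map g hg) (hφ.isUnit_map g hg)]
  have lift_apply (x : H) : hφ.lift ψ unit_g (φ x) = ψ x :=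
    DFunLike.congr_fun (hφ.lift_comp ψ unit_g) x
  refine ⟨fun g hg => ⟨map_g g hg, ?_, ?_⟩, hφ.lift ψ unit_g, hφ.lift_comp ψ unit_g,
    fun D hD => hφ.algHom_ext (hD.trans (hφ.lift_comp ψ unit_g).symm), fun x g hg => ?_⟩
  · rw [← inverse_g g hg, Ring.mul_inverse_cancel _ (unit_g g hg)]
  · rw [← inverse_g g hg, Ring.inverse_mul_cancel _ (unit_g g hg)]
  · rw [map_mul_inverse _ _ (hφ.isUnit_map g hg), lift_apply, lift_apply, inverse_g g hg]

/-- Let `k` be a field, `H` a `k`-bialgebra, and `G ⊆ H` a submonoid of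
group-like elements that is almost central via bialgebra automorphisms `I : G → Aut H`,
and write `L = H[G⁻¹]` with localization map `φ : H → L` (formalized, following the paper's
Definition 2.4, by the conditions (F1), (F2), (F3)).  Then the `k`-algebra homomorphism
`ψ = (φ ⊗ φ) ∘ Δ : H → L ⊗ₖ L` sends every `g ∈ G` to the invertible element `φ(g) ⊗ φ(g)`
(whose inverse is `φ(g)⁻¹ ⊗ φ(g)⁻¹`), and hence there exists a unique `k`-algebra
homomorphism `Δ̄ : L → L ⊗ₖ L` with `Δ̄ ∘ φ = (φ ⊗ φ) ∘ Δ`; it satisfies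
`Δ̄(x/g) = Σ (x′/g) ⊗ (x″/g)  ( = ((φ ⊗ φ)(Δ x)) · (φ(g)⁻¹ ⊗ φ(g)⁻¹) )`. -/
theorem stmt_6 {k H L : Type*} [Field k] [Ring H] [Bialgebra k H] [Ring L] [Algebra k L]
    (G : Submonoid H)
    (hGgl : ∀ g ∈ G, Coalgebra.comul (R := k) g = g ⊗ₜ[k] g ∧
      Coalgebra.counit (R := k) g = (1 : k))
    (I : G →* (H ≃ₐ[k] H))
    (hIco : ∀ (g : G) (x : H), Coalgebra.comul (R := k) (I g x) =
      TensorProduct.map (I g).toLinearMap (I g).toLinearMap (Coalgebra.comul (R := k) x))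
    (hIcu : ∀ (g : G) (x : H),
      Coalgebra.counit (R := k) (I g x) = Coalgebra.counit (R := k) x)
    (hC1 : ∀ (g : G) (x : H), (g : H) * x = I g x * (g : H))
    (hC2 : ∀ g : G, Set.BijOn (I g) (G : Set H) (G : Set H))
    (φ : H →ₐ[k] L)
    (hF1 : ∀ g ∈ G, IsUnit (φ g))
    (hF2 : ∀ a : L, ∃ x : H, ∃ g ∈ G, a = φ x * Ring.inverse (φ g))
    (hF3 : ∀ x : H, φ x = 0 ↔ ∃ g ∈ G, x * g = 0)
    -- `ψ = (φ ⊗ φ) ∘ Δ : H → L ⊗ₖ L` as a `k`-algebra homomorphism: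
    (ψ : H →ₐ[k] L ⊗[k] L)
    (hψ : ψ = (Algebra.TensorProduct.map φ φ).comp (Bialgebra.comulAlgHom k H)) :
    -- `ψ` sends every `g ∈ G` to `φ(g) ⊗ φ(g)`, invertible with inverse `φ(g)⁻¹ ⊗ φ(g)⁻¹`:
    (∀ g ∈ G, ψ g = φ g ⊗ₜ[k] φ g ∧
      ψ g * (Ring.inverse (φ g) ⊗ₜ[k] Ring.inverse (φ g)) = 1 ∧
      (Ring.inverse (φ g) ⊗ₜ[k] Ring.inverse (φ g)) * ψ g = 1) ∧
    -- hence there is a unique `k`-algebra homomorphism `Δ̄ : L → L ⊗ₖ L` with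
    -- `Δ̄ ∘ φ = (φ ⊗ φ) ∘ Δ`, and it satisfies the stated formula on fractions:
    ∃ Δbar : L →ₐ[k] L ⊗[k] L,
      Δbar.comp φ = ψ ∧
      (∀ D : L →ₐ[k] L ⊗[k] L, D.comp φ = ψ → D = Δbar) ∧
      (∀ x : H, ∀ g ∈ G,
        Δbar (φ x * Ring.inverse (φ g)) =
          ψ x * (Ring.inverse (φ g) ⊗ₜ[k] Ring.inverse (φ g))) :=
  stmt_6_general G (fun g hg => ⟨(hGgl g hg).2, (hGgl g hg).1⟩) φ
    ⟨hF1, hF2, fun x => (hF3 x).mp⟩ ψ hψ
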